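/- Let B > 0 and 0 < η ≤ 1/(2B²). Let p = (p_1,…,p_N) be a probability vector and let c_1,…,c_N ∈ [-B, B] be forecasts. Define the aggregated forecast γ = (1/(4ηB)) ln [ (Σ_{i=1}^N p_i e^{-η (B - c_i)²}) / (Σ_{i=1}^N p_i e^{-η (B + c_i)²}) ]. Then for every outcome y ∈ [-B, B]: (y - γ)² ≤ -(1/η) ln Σ_{i=1}^N p_i e^{-η (y - c_i)²}. -/

import Mathlib

/-!
Write `G y` for the mean over the experts of `exp (η ((y - γ)² - (y - c)²))`; the claim is that
`G y ≤ 1`. Since `(y - γ)² - (y - c)² = 2 (c - γ) (y - γ) - (c - γ)²` is affine in `y`, the function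
`G` is convex, so only the endpoints of the outcome interval matter, and the substitution function
is chosen to make the two endpoint values equal. That choice forces `γ` into the interval, so `γ`
is the mean of a law supported on the two endpoints. Averaging `G` over this law gives the common
endpoint value, while Hoeffding's lemma bounds the average of each expert's contribution by `1`.
-/

open MeasureTheory ProbabilityTheory Real Set

section FiniteDistributions

variable {ι : Type*} [Fintype ι] {w : ι → ℝ}

theorem exists_isProbabilityMeasure_forall_integral_eq_sum
    [MeasurableSpace ι] [MeasurableSingletonClass ι] (hw : ∀ i, 0 ≤ w i) (hsum : ∑ i, w i = 1) :
    ∃ μ : Measure ι, IsProbabilityMeasure μ ∧ ∀ f : ι → ℝ, ∫ i, f i ∂μ = ∑ i, w i * f i := by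
  have hsum' : ∑ i, ENNReal.ofReal (w i) = 1 := by
    rw [← ENNReal.ofReal_sum_of_nonneg fun i _ => hw i, hsum, ENNReal.ofReal_one]
  refine ⟨(PMF.ofFintype _ hsum').toMeasure, inferInstance, fun f => ?_⟩
  simp only [PMF.integral_eq_sum, PMF.ofFintype_apply, ENNReal.toReal_ofReal (hw _), smul_eq_mul]

theorem sum_mul_exp_mul_sub_mean_le {x : ι → ℝ} {a b : ℝ} (hw : ∀ i, 0 ≤ w i)
    (hsum : ∑ i, w i = 1) (hx : ∀ i, x i ∈ Icc a b) (s : ℝ) :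
    ∑ i, w i * exp (s * (x i - ∑ j, w j * x j)) ≤ exp ((b - a) ^ 2 * s ^ 2 / 8) := by
  let _ : MeasurableSpace ι := ⊤
  obtain ⟨μ, _, hμ⟩ := exists_isProbabilityMeasure_forall_integral_eq_sum hw hsum
  have hoeffding := (hasSubgaussianMGF_of_mem_Icc (μ := μ) (X := x)
    measurable_from_top.aemeasurable (.of_forall hx)).mgf_le s
  simp only [mgf, hμ] at hoeffding
  refine hoeffding.trans_eq (congrArg exp ?_)
  simp only [NNReal.coe_pow, NNReal.coe_div, coe_nnnorm, NNReal.coe_ofNat, Real.norm_eq_abs,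
    div_pow, sq_abs]
  ring

end FiniteDistributions

/-- The exponentiated regret at outcome `y` of the forecast `g` against the experts `X`, averaged
over the experts with weights `μ`. The forecast `g` witnesses `η`-mixability at `y` exactly when
this is at most `1`. -/
noncomputable def expRegret {Ω : Type*} [MeasurableSpace Ω] (μ : Measure Ω) (X : Ω → ℝ)
    (η g y : ℝ) : ℝ :=
  ∫ ω, exp (η * ((y - g) ^ 2 - (y - X ω) ^ 2)) ∂μ

section ExpRegret

variable {Ω : Type*} [MeasurableSpace Ω] {μ : Measure Ω} {X : Ω → ℝ} {η g a b : ℝ}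

theorem expRegret_eq_exp_mul_integral (y : ℝ) :
    expRegret μ X η g y = exp (η * (y - g) ^ 2) * ∫ ω, exp (-η * (y - X ω) ^ 2) ∂μ := by
  rw [expRegret, ← integral_const_mul]
  congr with ω
  rw [← exp_add]
  ring_nf

theorem integrable_exp_mul_sq_sub_sq [IsFiniteMeasure μ] (hη : 0 ≤ η) (hX : AEMeasurable X μ)
    (g y : ℝ) : Integrable (fun ω => exp (η * ((y - g) ^ 2 - (y - X ω) ^ 2))) μ := by
  refine .of_mem_Icc 0 (exp (η * (y - g) ^ 2)) (by fun_prop) (.of_forall fun ω => ?_)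
  refine ⟨(exp_pos _).le, exp_le_exp.2 (mul_le_mul_of_nonneg_left ?_ hη)⟩
  exact sub_le_self _ (sq_nonneg _)

theorem expRegret_pos [IsFiniteMeasure μ] [NeZero μ] (hη : 0 ≤ η) (hX : AEMeasurable X μ)
    (g y : ℝ) : 0 < expRegret μ X η g y :=
  integral_exp_pos (integrable_exp_mul_sq_sub_sq hη hX g y)

theorem integral_exp_neg_mul_sq_sub_pos [IsFiniteMeasure μ] [NeZero μ] (hη : 0 ≤ η)
    (hX : AEMeasurable X μ) (y : ℝ) : 0 < ∫ ω, exp (-η * (y - X ω) ^ 2) ∂μ := by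
  simpa [expRegret_eq_exp_mul_integral] using expRegret_pos hη hX y y

theorem expRegret_le_one_iff [IsFiniteMeasure μ] [NeZero μ] (hη : 0 < η) (hX : AEMeasurable X μ)
    (y : ℝ) :
    expRegret μ X η g y ≤ 1 ↔
      (y - g) ^ 2 ≤ -(1 / η) * log (∫ ω, exp (-η * (y - X ω) ^ 2) ∂μ) := by
  have hpos := integral_exp_neg_mul_sq_sub_pos hη.le hX y
  rw [expRegret_eq_exp_mul_integral, ← log_nonpos_iff (by positivity),
    log_mul (exp_pos _).ne' hpos.ne', log_exp, ← le_neg_iff_add_nonpos_right, mul_comm η,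
    ← le_div_iff₀ hη]
  ring_nf

theorem convexOn_expRegret [IsFiniteMeasure μ] (hη : 0 ≤ η) (hX : AEMeasurable X μ) (g : ℝ) :
    ConvexOn ℝ univ (expRegret μ X η g) := by
  refine integral_convexOn_of_integrand_ae convex_univ (.of_forall fun ω => ?_)
    fun y _ => integrable_exp_mul_sq_sub_sq hη hX g y
  have haffine : (fun y => exp (η * ((y - g) ^ 2 - (y - X ω) ^ 2))) =
      exp ∘ AffineMap.lineMap (η * (g ^ 2 - X ω ^ 2))
        (η * (g ^ 2 - X ω ^ 2) + 2 * η * (X ω - g)) := by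
    ext y
    simp only [Function.comp_apply, AffineMap.lineMap_apply_ring]
    ring_nf
  rw [haffine]
  exact convexOn_exp.comp_affineMap _

theorem expRegret_antitone [IsFiniteMeasure μ] (hη : 0 ≤ η) (hX : AEMeasurable X μ)
    (hXg : ∀ᵐ ω ∂μ, X ω ≤ g) : Antitone (expRegret μ X η g) := fun y z hyz => by
  refine integral_mono_ae (integrable_exp_mul_sq_sub_sq hη hX g z)
    (integrable_exp_mul_sq_sub_sq hη hX g y) ?_
  filter_upwards [hXg] with ω hω
  refine exp_le_exp.2 (mul_le_mul_of_nonneg_left ?_ hη)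
  linarith [mul_nonneg (sub_nonneg.2 hyz) (sub_nonneg.2 hω)]

theorem expRegret_monotone [IsFiniteMeasure μ] (hη : 0 ≤ η) (hX : AEMeasurable X μ)
    (hgX : ∀ᵐ ω ∂μ, g ≤ X ω) : Monotone (expRegret μ X η g) := fun y z hyz => by
  refine integral_mono_ae (integrable_exp_mul_sq_sub_sq hη hX g y)
    (integrable_exp_mul_sq_sub_sq hη hX g z) ?_
  filter_upwards [hgX] with ω hω
  refine exp_le_exp.2 (mul_le_mul_of_nonneg_left ?_ hη)
  linarith [mul_nonneg (sub_nonneg.2 hyz) (sub_nonneg.2 hω)]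

theorem expRegret_eq_exp_mul_expRegret (g' y : ℝ) :
    expRegret μ X η g' y = exp (η * ((y - g') ^ 2 - (y - g) ^ 2)) * expRegret μ X η g y := by
  rw [expRegret_eq_exp_mul_integral, expRegret_eq_exp_mul_integral, ← mul_assoc, ← exp_add]
  ring_nf

theorem mem_Icc_of_expRegret_eq [IsFiniteMeasure μ] [NeZero μ] (hη : 0 < η) (hab : a < b)
    (hX : AEMeasurable X μ) (hXab : ∀ᵐ ω ∂μ, X ω ∈ Icc a b)
    (heq : expRegret μ X η g a = expRegret μ X η g b) : g ∈ Icc a b := by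
  have hpos := expRegret_pos hη.le hX g b
  have hscale : 0 < η * (b - a) := mul_pos hη (sub_pos.2 hab)
  constructor
  · have hmono := expRegret_monotone hη.le hX (hXab.mono fun _ h => h.1) hab.le
    rw [expRegret_eq_exp_mul_expRegret (g := g) a a, expRegret_eq_exp_mul_expRegret (g := g) a b,
      heq, mul_le_mul_iff_left₀ hpos, exp_le_exp] at hmono
    exact le_of_mul_le_mul_left (by linarith) hscale
  · have hanti := expRegret_antitone hη.le hX (hXab.mono fun _ h => h.2) hab.le
    rw [expRegret_eq_exp_mul_expRegret (g := g) b a, expRegret_eq_exp_mul_expRegret (g := g) b b,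
      heq, mul_le_mul_iff_left₀ hpos, exp_le_exp] at hanti
    exact le_of_mul_le_mul_left (by linarith) hscale

theorem sum_mul_exp_mul_sq_sub_sq_le_one {ι : Type*} [Fintype ι] {w y : ι → ℝ} (hη : 0 ≤ η)
    (hηab : η * (b - a) ^ 2 ≤ 2) (hw : ∀ i, 0 ≤ w i) (hsum : ∑ i, w i = 1)
    (hy : ∀ i, y i ∈ Icc a b) (hmean : ∑ i, w i * y i = g) (x : ℝ) :
    ∑ i, w i * exp (η * ((y i - g) ^ 2 - (y i - x) ^ 2)) ≤ 1 := by
  have hoeffding := sum_mul_exp_mul_sub_mean_le hw hsum hy (2 * η * (x - g))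
  rw [hmean] at hoeffding
  calc ∑ i, w i * exp (η * ((y i - g) ^ 2 - (y i - x) ^ 2))
      = exp (-η * (x - g) ^ 2) * ∑ i, w i * exp (2 * η * (x - g) * (y i - g)) := by
        rw [Finset.mul_sum]
        refine Finset.sum_congr rfl fun i _ => ?_
        rw [mul_left_comm, ← exp_add]
        ring_nf
    _ ≤ exp (-η * (x - g) ^ 2) * exp ((b - a) ^ 2 * (2 * η * (x - g)) ^ 2 / 8) := by gcongr
    _ ≤ 1 := by
        rw [← exp_add, exp_le_one_iff]
        linarith [mul_nonneg (mul_nonneg hη (sq_nonneg (x - g))) (sub_nonneg.2 hηab)]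

theorem sum_mul_expRegret_le_one [IsProbabilityMeasure μ] {ι : Type*} [Fintype ι] {w y : ι → ℝ}
    (hη : 0 ≤ η) (hηab : η * (b - a) ^ 2 ≤ 2) (hX : AEMeasurable X μ) (hw : ∀ i, 0 ≤ w i)
    (hsum : ∑ i, w i = 1) (hy : ∀ i, y i ∈ Icc a b) (hmean : ∑ i, w i * y i = g) :
    ∑ i, w i * expRegret μ X η g (y i) ≤ 1 := by
  have hint i := (integrable_exp_mul_sq_sub_sq hη hX g (y i)).const_mul (w i)
  calc ∑ i, w i * expRegret μ X η g (y i)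
      = ∫ ω, ∑ i, w i * exp (η * ((y i - g) ^ 2 - (y i - X ω) ^ 2)) ∂μ := by
        rw [integral_finsetSum _ fun i _ => hint i]
        simp only [integral_const_mul, expRegret]
    _ ≤ ∫ _, 1 ∂μ := integral_mono (integrable_finsetSum _ fun i _ => hint i)
        (integrable_const 1)
        fun ω => sum_mul_exp_mul_sq_sub_sq_le_one hη hηab hw hsum hy hmean (X ω)
    _ = 1 := by simp

theorem expRegret_le_one_of_eq [IsProbabilityMeasure μ] (hη : 0 < η) (hab : a < b)
    (hηab : η * (b - a) ^ 2 ≤ 2) (hX : AEMeasurable X μ) (hXab : ∀ᵐ ω ∂μ, X ω ∈ Icc a b)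
    (heq : expRegret μ X η g a = expRegret μ X η g b) {y : ℝ} (hy : y ∈ Icc a b) :
    expRegret μ X η g y ≤ 1 := by
  have hg := mem_Icc_of_expRegret_eq hη hab hX hXab heq
  rw [← segment_eq_Icc hab.le] at hg
  obtain ⟨u, v, hu, hv, huv, hmean⟩ := hg
  have hendpoint : expRegret μ X η g b ≤ 1 := by
    have havg := sum_mul_expRegret_le_one (w := ![u, v]) (y := ![a, b]) hη.le hηab hX
      (by simp [Fin.forall_fin_two, hu, hv]) (by simpa using huv)
      (by simp [Fin.forall_fin_two, hab.le]) (by simpa using hmean)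
    simpa [heq, ← add_mul, huv] using havg
  calc expRegret μ X η g y
      ≤ max (expRegret μ X η g a) (expRegret μ X η g b) :=
        (convexOn_expRegret hη.le hX g).le_max_of_mem_Icc (mem_univ a) (mem_univ b) hy
    _ ≤ 1 := max_le (heq.trans_le hendpoint) hendpoint

theorem expRegret_eq_of_eq_log_div [IsFiniteMeasure μ] [NeZero μ] (hη : 0 < η) (hab : a < b)
    (hX : AEMeasurable X μ)
    (hg : g = (a + b) / 2 + 1 / (2 * η * (b - a)) *
      log ((∫ ω, exp (-η * (b - X ω) ^ 2) ∂μ) / ∫ ω, exp (-η * (a - X ω) ^ 2) ∂μ)) :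
    expRegret μ X η g a = expRegret μ X η g b := by
  have ha := integral_exp_neg_mul_sq_sub_pos hη.le hX a
  have hb := integral_exp_neg_mul_sq_sub_pos hη.le hX b
  have hba : b - a ≠ 0 := (sub_pos.2 hab).ne'
  rw [log_div hb.ne' ha.ne'] at hg
  field_simp at hg
  rw [expRegret_eq_exp_mul_integral, expRegret_eq_exp_mul_integral]
  refine log_injOn_pos (mul_pos (exp_pos _) ha) (mul_pos (exp_pos _) hb) ?_
  rw [log_mul (exp_pos _).ne' ha.ne', log_mul (exp_pos _).ne' hb.ne', log_exp, log_exp]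
  simp only [neg_mul]
  linarith

end ExpRegret

theorem statement_4_general {Ω : Type*} [MeasurableSpace Ω] {μ : Measure Ω}
    [IsProbabilityMeasure μ] {c : Ω → ℝ} {a b η γ : ℝ} (hab : a < b) (hη : 0 < η)
    (hη' : η ≤ 2 / (b - a) ^ 2) (hc : AEMeasurable c μ) (hcab : ∀ᵐ ω ∂μ, c ω ∈ Icc a b)
    (hγ : γ = (a + b) / 2 + 1 / (2 * η * (b - a)) *
      log ((∫ ω, exp (-η * (b - c ω) ^ 2) ∂μ) / ∫ ω, exp (-η * (a - c ω) ^ 2) ∂μ)) :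
    ∀ y ∈ Icc a b, (y - γ) ^ 2 ≤ -(1 / η) * log (∫ ω, exp (-η * (y - c ω) ^ 2) ∂μ) := by
  intro y hy
  have hηab : η * (b - a) ^ 2 ≤ 2 := (le_div_iff₀ (pow_pos (sub_pos.2 hab) 2)).1 hη'
  have heq := expRegret_eq_of_eq_log_div hη hab hc hγ
  exact (expRegret_le_one_iff hη hc y).1 (expRegret_le_one_of_eq hη hab hηab hc hcab heq hy)

/-- η-mixability of the square loss on `[-B, B]` for `0 < η ≤ 1/(2B²)`,
witnessed by Vovk's substitution function: the forecast
`γ = (1/(4ηB)) ln ((∑ p i e^{-η(B - c i)²}) / (∑ p i e^{-η(B + c i)²}))`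
satisfies `(y - γ)² ≤ -(1/η) ln ∑ p i e^{-η(y - c i)²}` for every `y ∈ [-B, B]`. -/
theorem statement_4
    (B η : ℝ) (hB : 0 < B) (hη : 0 < η) (hη' : η ≤ 1 / (2 * B ^ 2))
    (N : ℕ) (hN : 1 ≤ N) (p c : Fin N → ℝ)
    (hpnonneg : ∀ i, 0 ≤ p i) (hpsum : ∑ i, p i = 1)
    (hc : ∀ i, c i ∈ Set.Icc (-B) B)
    (γ : ℝ)
    (hγ : γ = (1 / (4 * η * B)) *
      Real.log ((∑ i, p i * Real.exp (-η * (B - c i) ^ 2)) /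
        (∑ i, p i * Real.exp (-η * (B + c i) ^ 2)))) :
    ∀ y ∈ Set.Icc (-B) B,
      (y - γ) ^ 2 ≤ -(1 / η) * Real.log (∑ i, p i * Real.exp (-η * (y - c i) ^ 2)) := by
  obtain ⟨μ, _, hμ⟩ := exists_isProbabilityMeasure_forall_integral_eq_sum hpnonneg hpsum
  simp only [← hμ] at hγ ⊢
  refine statement_4_general (by linarith) hη (hη'.trans_eq ?_)
    measurable_from_top.aemeasurable (.of_forall hc) (hγ.trans ?_)
  · ring
  · ring_nf
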